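/- arXiv:2203.11738 — 3 statements merged into one kernel-verified Lean document; each statement's English description precedes it below -/
import Mathlib

section
/- Let M(λ, t) be the (n−1) × (n−1) Jacobian matrix of the polynomial map Φ, with rows indexed by the variables λ, t_{n−3}, …, t_0 and columns indexed by the components b_{n−2}, …, b_0 of Φ; explicitly, the row corresponding to λ has entries ∂b_{n−2}/∂λ = −2λ and ∂b_i/∂λ = −t_i for 0 ≤ i ≤ n−3, and the row corresponding to t_i has entry −λ in the column of b_i, entry 1 in the column of b_{i+1}, and 0 elsewhere. Then there is a sign ε ∈ {1, −1}, depending only on n, such that for all λ ∈ ℂ and t ∈ ℂ^{n−2}, det M(λ, t) = ε · Q(λ; λ, t) = ε · (2λ^{n−1} + Σ_{i=0}^{n−3} t_i λ^i). -/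
open Polynomial

/-- `P(w; b) = w^n + ∑_{i=0}^{n-2} b_i w^i`. -/
noncomputable def Pb (n : ℕ) (b : Fin (n - 1) → ℂ) : Polynomial ℂ :=
  X ^ n + ∑ i : Fin (n - 1), C (b i) * X ^ (i : ℕ)

/-- `Q(w; λ, t) = w^{n-1} + λ w^{n-2} + ∑_{i=0}^{n-3} t_i w^i`. -/
noncomputable def Qp (n : ℕ) (lam : ℂ) (t : Fin (n - 2) → ℂ) : Polynomial ℂ :=
  X ^ (n - 1) + C lam * X ^ (n - 2) + ∑ i : Fin (n - 2), C (t i) * X ^ (i : ℕ)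

/-- The extension of `t` by the conventions `t_{n-2} = λ` (and `0` beyond). -/
noncomputable def tExt (n : ℕ) (lam : ℂ) (t : Fin (n - 2) → ℂ) : ℕ → ℂ :=
  fun j => if h : j < n - 2 then t ⟨j, h⟩ else if j = n - 2 then lam else 0

/-- `Φ(λ, t)_i = t_{i-1} - λ t_i`, with the conventions `t_{-1} = 0`, `t_{n-2} = λ`. -/
noncomputable def Phi (n : ℕ) (lam : ℂ) (t : Fin (n - 2) → ℂ) : Fin (n - 1) → ℂ :=
  fun i => (if (i : ℕ) = 0 then 0 else tExt n lam t ((i : ℕ) - 1)) - lam * tExt n lam t (i : ℕ)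


/-- The Jacobian matrix of `Φ`: row `0` corresponds to the variable `λ`, and row `r`
(for `1 ≤ r ≤ n-2`) corresponds to the variable `t_{r-1}`; column `c` corresponds to the
component `b_c` of `Φ`.  The `λ`-row has entries `∂b_{n-2}/∂λ = -2λ` and `∂b_i/∂λ = -t_i`
for `0 ≤ i ≤ n-3`; the row of `t_i` has entry `-λ` in the column of `b_i`, entry `1` in
the column of `b_{i+1}`, and `0` elsewhere. -/
noncomputable def Jac (n : ℕ) (lam : ℂ) (t : Fin (n - 2) → ℂ) :
    Matrix (Fin (n - 1)) (Fin (n - 1)) ℂ :=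
  fun r c =>
    if (r : ℕ) = 0 then
      if h : (c : ℕ) < n - 2 then -(t ⟨(c : ℕ), h⟩) else -(2 * lam)
    else
      if (c : ℕ) = (r : ℕ) - 1 then -lam
      else if (c : ℕ) = (r : ℕ) then 1 else 0

/-!
The matrix `Jac n lam t` sends the column vector `(1, λ, λ², …)` to a multiple of the first basis
vector: the row of each `t_i` annihilates it, and the row of `λ` pairs with it to `-Q(λ; λ, t)`.
Multiplying by the adjugate expresses the determinant as this multiple times the minor obtained by
deleting the first row and column, which is lower unitriangular.
-/

section HornerMatrix

variable {R : Type*} [CommRing R] {m : ℕ}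

theorem det_mul_apply_zero_of_mulVec_eq_single
    {M : Matrix (Fin (m + 1)) (Fin (m + 1)) R} {w : Fin (m + 1) → R} {s : R}
    (hM : M.mulVec w = Pi.single 0 s) :
    M.det * w 0 = (M.submatrix Fin.succ Fin.succ).det * s := by
  have adjugate_zero_zero : M.adjugate 0 0 = (M.submatrix Fin.succ Fin.succ).det := by
    simp [Matrix.adjugate_fin_succ_eq_det_submatrix]
  calc M.det * w 0 = (M.adjugate.mulVec (M.mulVec w)) 0 := by
        simp [Matrix.mulVec_mulVec, Matrix.adjugate_mul, Matrix.smul_mulVec]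
    _ = (M.submatrix Fin.succ Fin.succ).det * s := by
        simp [hM, adjugate_zero_zero]

/-- The square matrix with first row `v` whose `i`-th row, for `i ≥ 1`, has `-x` in column `i - 1`,
`1` in column `i` and `0` elsewhere. Its determinant is `∑ i, v i * x ^ i`; the Jacobian matrix of
`Φ` has this shape. -/
def hornerMatrix (x : R) (v : Fin (m + 1) → R) : Matrix (Fin (m + 1)) (Fin (m + 1)) R :=
  Matrix.of (Fin.cons v fun i => Pi.single i.succ 1 - Pi.single i.castSucc x)

theorem hornerMatrix_zero (x : R) (v : Fin (m + 1) → R) : hornerMatrix x v 0 = v :=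
  rfl

theorem hornerMatrix_succ (x : R) (v : Fin (m + 1) → R) (i : Fin m) :
    hornerMatrix x v i.succ = Pi.single i.succ 1 - Pi.single i.castSucc x :=
  rfl

theorem hornerMatrix_mulVec_pow (x : R) (v : Fin (m + 1) → R) :
    (hornerMatrix x v).mulVec (fun i => x ^ (i : ℕ)) =
      Pi.single 0 (∑ i, v i * x ^ (i : ℕ)) := by
  ext i
  cases i using Fin.cases with
  | zero => simp [Matrix.mulVec, hornerMatrix_zero, dotProduct]
  | succ i =>
    rw [Matrix.mulVec, hornerMatrix_succ, sub_dotProduct]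
    simp [pow_succ']

theorem det_hornerMatrix_submatrix_succ (x : R) (v : Fin (m + 1) → R) :
    ((hornerMatrix x v).submatrix Fin.succ Fin.succ).det = 1 := by
  rw [Matrix.det_of_isLowerTriangular]
  · simp [hornerMatrix_succ, Fin.ext_iff]
  · intro i j (hij : i < j)
    have succ_ne : j.succ ≠ i.succ := by simpa using hij.ne'
    have succ_ne_castSucc : j.succ ≠ i.castSucc := by grind
    simp [hornerMatrix_succ, succ_ne, succ_ne_castSucc]

theorem det_hornerMatrix (x : R) (v : Fin (m + 1) → R) :
    (hornerMatrix x v).det = ∑ i, v i * x ^ (i : ℕ) := by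
  simpa [det_hornerMatrix_submatrix_succ] using
    det_mul_apply_zero_of_mulVec_eq_single (hornerMatrix_mulVec_pow x v)

end HornerMatrix

section Jacobian

variable {m : ℕ}

theorem Jac_eq_hornerMatrix (lam : ℂ) (t : Fin m → ℂ) :
    Jac (m + 2) lam t = hornerMatrix lam (Fin.snoc (-t) (-(2 * lam)) : Fin (m + 1) → ℂ) := by
  ext r c
  cases r using Fin.cases with
  | zero => cases c using Fin.lastCases <;> simp [Jac, hornerMatrix_zero]
  | succ r =>
    simp only [Jac, hornerMatrix_succ, Pi.sub_apply, Pi.single_apply, Fin.ext_iff, Fin.val_succ,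
      Fin.val_castSucc]
    grind

theorem det_Jac (lam : ℂ) (t : Fin m → ℂ) :
    (Jac (m + 2) lam t).det = -(2 * lam ^ (m + 1) + ∑ i, t i * lam ^ (i : ℕ)) := by
  rw [Jac_eq_hornerMatrix, det_hornerMatrix, Fin.sum_univ_castSucc]
  simp only [Fin.snoc_castSucc, Fin.snoc_last, Pi.neg_apply, Fin.val_castSucc, Fin.val_last,
    neg_mul, Finset.sum_neg_distrib]
  ring

theorem eval_Qp_self (lam : ℂ) (t : Fin m → ℂ) :
    (Qp (m + 2) lam t).eval lam = 2 * lam ^ (m + 1) + ∑ i, t i * lam ^ (i : ℕ) := by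
  have Qp_eq : Qp (m + 2) lam t = X ^ (m + 1) + C lam * X ^ m + ∑ i, C (t i) * X ^ (i : ℕ) := rfl
  simp only [Qp_eq, eval_add, eval_mul, eval_pow, eval_X, eval_C, eval_finsetSum]
  ring

end Jacobian

theorem statement6 (n : ℕ) (hn : 2 ≤ n) :
    ∃ ε : ℂ, (ε = 1 ∨ ε = -1) ∧
      ∀ (lam : ℂ) (t : Fin (n - 2) → ℂ),
        (Jac n lam t).det = ε * (Qp n lam t).eval lam ∧
        (Jac n lam t).det =
          ε * (2 * lam ^ (n - 1) + ∑ i : Fin (n - 2), t i * lam ^ (i : ℕ)) := by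
  obtain ⟨m, rfl⟩ := Nat.exists_eq_add_of_le' hn
  refine ⟨-1, Or.inr rfl, fun lam t => ⟨?_, ?_⟩⟩
  · rw [det_Jac, eval_Qp_self, neg_one_mul]
  · exact (det_Jac lam t).trans (neg_one_mul _).symm
end

section
/- Let t ∈ ℂ with t ≠ 0 and let f_t = x_0³ + x_1³ + x_2³ + x_3³ + t·x_0x_1x_2x_3 ∈ ℂ[x_0, x_1, x_2, x_3]. Then the Tjurina algebra ℂ[x_0, x_1, x_2, x_3]/(f_t, ∂f_t/∂x_0, ∂f_t/∂x_1, ∂f_t/∂x_2, ∂f_t/∂x_3) is a finite-dimensional ℂ-vector space of dimension 15. (This computes dim H^0(X_t; T^1_{X_t}) = 15 for the weight-one deformation X_t of the O_{16} singularity.) -/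
open MvPolynomial

/-- The Tjurina ideal of `f ∈ ℂ[x₀,x₁,x₂,x₃]`: the ideal generated by `f` and its four
partial derivatives. -/
noncomputable def tjurinaIdeal (f : MvPolynomial (Fin 4) ℂ) : Ideal (MvPolynomial (Fin 4) ℂ) :=
  Ideal.span {f, pderiv 0 f, pderiv 1 f, pderiv 2 f, pderiv 3 f}

/-- The weight-one deformation `f_t = x₀³ + x₁³ + x₂³ + x₃³ + t·x₀x₁x₂x₃` of the Fermat
cubic cone. -/
noncomputable def fermatCubicDef (t : ℂ) : MvPolynomial (Fin 4) ℂ :=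
  X 0 ^ 3 + X 1 ^ 3 + X 2 ^ 3 + X 3 ^ 3 + C t * (X 0 * X 1 * X 2 * X 3)

/-!
Write `n` for the number of variables and `a = -t / 3`. The partial derivatives of `f_t` give
`xᵢ² = a ∏_{j ≠ i} xⱼ`, and by Euler's formula `f_t` then contributes a unit multiple of `∏ xᵢ`,
as `t (n - 3) ≠ 0`. Modulo these relations `xᵢ²` is divisible by every squarefree monomial not
involving `xᵢ`. Hence `xᵢ³`, then `xᵢ² xⱼ²`, and, as there are two further variables when `n ≥ 4`,
also `xᵢ² xⱼ` vanish, so the `2ⁿ - 1` squarefree monomials other than `∏ xᵢ` span the quotient.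
They are independent because the functionals reading off the coefficient of such a monomial, after
replacing each `xᵢ²` by `a ∏_{j ≠ i} xⱼ`, vanish on the ideal.
-/

open Finset

section Divisibility

variable {σ A : Type*} [Fintype σ] [DecidableEq σ] [CommMonoidWithZero A] {x : σ → A}

lemma prod_dvd_sq_of_notMem (hsq : ∀ i, ∏ j ∈ {i}ᶜ, x j ∣ x i ^ 2) {i : σ} {S : Finset σ}
    (hi : i ∉ S) : ∏ j ∈ S, x j ∣ x i ^ 2 :=
  (prod_dvd_prod_of_subset _ _ _
    (by rwa [subset_compl_comm, singleton_subset_iff, mem_compl])).trans (hsq i)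

lemma cube_eq_zero_of_prod_compl_dvd_sq (hsq : ∀ i, ∏ j ∈ {i}ᶜ, x j ∣ x i ^ 2)
    (hprod : ∏ i, x i = 0) (i : σ) : x i ^ 3 = 0 := by
  rw [← zero_dvd_iff, ← hprod, Fintype.prod_eq_mul_prod_compl i, pow_succ']
  exact mul_dvd_mul_left _ (hsq i)

lemma sq_mul_sq_eq_zero_of_prod_compl_dvd_sq (hsq : ∀ i, ∏ j ∈ {i}ᶜ, x j ∣ x i ^ 2)
    (hprod : ∏ i, x i = 0) {i j : σ} (hij : i ≠ j) : x i ^ 2 * x j ^ 2 = 0 := by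
  have hdvd : x j ∣ x i ^ 2 := by
    simpa using prod_dvd_sq_of_notMem hsq (S := {j}) (by simpa using hij)
  rw [← zero_dvd_iff, ← cube_eq_zero_of_prod_compl_dvd_sq hsq hprod j, pow_succ']
  exact mul_dvd_mul_right hdvd _

lemma sq_mul_eq_zero_of_prod_compl_dvd_sq (hσ : 3 < Fintype.card σ)
    (hsq : ∀ i, ∏ j ∈ {i}ᶜ, x j ∣ x i ^ 2) (hprod : ∏ i, x i = 0) {i j : σ} (hij : i ≠ j) :
    x i ^ 2 * x j = 0 := by
  obtain ⟨k, hk, l, hl, hkl⟩ : ∃ k ∈ ({i, j} : Finset σ)ᶜ, ∃ l ∈ ({i, j} : Finset σ)ᶜ, k ≠ l := by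
    rw [← one_lt_card, card_compl, card_pair hij]
    lia
  simp only [mem_compl, mem_insert, mem_singleton, not_or] at hk hl
  have hi : x j * (x k * x l) ∣ x i ^ 2 := by
    simpa [prod_insert, hkl, Ne.symm hk.2, Ne.symm hl.2] using
      prod_dvd_sq_of_notMem hsq (i := i) (S := {j, k, l})
        (by simp [hij, Ne.symm hk.1, Ne.symm hl.1])
  have hj : x k * x l ∣ x j ^ 2 := by
    simpa [prod_pair hkl] using
      prod_dvd_sq_of_notMem hsq (i := j) (S := {k, l}) (by simp [Ne.symm hk.2, Ne.symm hl.2])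
  rw [← zero_dvd_iff]
  calc
    0 = x k ^ 2 * x l ^ 2 := (sq_mul_sq_eq_zero_of_prod_compl_dvd_sq hsq hprod hkl).symm
    _ = x k * x l * (x k * x l) := by rw [← mul_pow, sq]
    _ ∣ x j ^ 2 * (x k * x l) := mul_dvd_mul_right hj _
    _ = x j * (x k * x l) * x j := by rw [sq, mul_assoc, mul_comm]
    _ ∣ x i ^ 2 * x j := mul_dvd_mul_right hi _

end Divisibility

section SquarefreeExponent

variable {σ : Type*}

/-- The exponent vector of the squarefree monomial `∏ i ∈ S, X i`. -/
noncomputable def squarefreeExponent (S : Finset σ) : σ →₀ ℕ :=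
  Finsupp.indicator S fun _ _ => 1

lemma prod_X_eq_monomial {R : Type*} [CommSemiring R] (S : Finset σ) :
    (∏ i ∈ S, X i : MvPolynomial σ R) = monomial (squarefreeExponent S) 1 := by
  rw [squarefreeExponent, Finsupp.indicator_eq_sum_single, monomial_sum_one]
  rfl

lemma squarefreeExponent_apply [DecidableEq σ] (S : Finset σ) (i : σ) :
    squarefreeExponent S i = if i ∈ S then 1 else 0 := by
  simp [squarefreeExponent, Finsupp.indicator_apply]

lemma squarefreeExponent_le_iff {S T : Finset σ} :
    squarefreeExponent S ≤ squarefreeExponent T ↔ S ⊆ T := by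
  classical
  simp only [Finsupp.le_def, squarefreeExponent_apply, subset_iff]
  refine forall_congr' fun i => ?_
  split_ifs <;> simp_all

lemma squarefreeExponent_injective :
    Function.Injective (squarefreeExponent : Finset σ → σ →₀ ℕ) := fun _ _ h =>
  (squarefreeExponent_le_iff.mp h.le).antisymm (squarefreeExponent_le_iff.mp h.ge)

lemma not_single_two_le_squarefreeExponent (i : σ) (S : Finset σ) :
    ¬ Finsupp.single i 2 ≤ squarefreeExponent S := by
  classical
  rw [Finsupp.single_le_iff, squarefreeExponent_apply]
  split_ifs <;> simp

lemma not_squarefreeExponent_le_single {S : Finset σ} (hS : S.Nontrivial) (i : σ) (n : ℕ) :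
    ¬ squarefreeExponent S ≤ Finsupp.single i n := by
  classical
  obtain ⟨j, hj, hji⟩ := hS.exists_ne i
  intro h
  simpa [squarefreeExponent_apply, mem_coe.mp hj, hji] using h j

lemma squarefreeExponent_or_single_two_or_le (m : σ →₀ ℕ) :
    (∃ S, m = squarefreeExponent S) ∨ (∃ i, m = Finsupp.single i 2) ∨
      (∃ i, Finsupp.single i 3 ≤ m) ∨
      ∃ i j, i ≠ j ∧ Finsupp.single i 2 + Finsupp.single j 1 ≤ m := by
  classical
  by_cases hm : ∀ i, m i < 2
  · refine .inl ⟨m.support, Finsupp.ext fun i => ?_⟩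
    have := hm i
    simp only [squarefreeExponent_apply, Finsupp.mem_support_iff]
    split_ifs <;> lia
  push Not at hm
  obtain ⟨i, hi⟩ := hm
  by_cases hother : ∃ j, i ≠ j ∧ m j ≠ 0
  · obtain ⟨j, hij, hj⟩ := hother
    refine .inr (.inr (.inr ⟨i, j, hij, fun k => ?_⟩))
    simp only [Finsupp.add_apply, Finsupp.single_apply]
    grind
  push Not at hother
  rcases hi.eq_or_lt with hi | hi
  · refine .inr (.inl ⟨i, Finsupp.ext fun j => ?_⟩)
    grind
  · exact .inr (.inr (.inl ⟨i, Finsupp.single_le_iff.mpr hi⟩))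

end SquarefreeExponent

section Span

variable {σ R A : Type*} [CommSemiring R] [CommSemiring A] [Algebra R A] {x : σ → A} {a : σ → R}

lemma aeval_monomial_dvd_of_le {m n : σ →₀ ℕ} (h : m ≤ n) :
    aeval x (monomial m (1 : R)) ∣ aeval x (monomial n (1 : R)) :=
  map_dvd _ (monomial_dvd_monomial.mpr ⟨.inr h, one_dvd _⟩)

variable [Fintype σ] [DecidableEq σ]

lemma aeval_monomial_mem_span_squarefree (hσ : 3 < Fintype.card σ)
    (hsq : ∀ i, x i ^ 2 = a i • ∏ j ∈ {i}ᶜ, x j) (hprod : ∏ i, x i = 0) (m : σ →₀ ℕ) :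
    aeval x (monomial m (1 : R)) ∈
      Submodule.span R (Set.range fun S : {S : Finset σ // S ≠ univ} => ∏ i ∈ S.1, x i) := by
  have hdvd (i : σ) : ∏ j ∈ {i}ᶜ, x j ∣ x i ^ 2 := by
    rw [hsq, Algebra.smul_def]
    exact dvd_mul_left _ _
  set V := Submodule.span R (Set.range fun S : {S : Finset σ // S ≠ univ} => ∏ i ∈ S.1, x i)
  have hspan {S : Finset σ} (hS : S ≠ univ) : ∏ i ∈ S, x i ∈ V :=
    Submodule.subset_span ⟨⟨S, hS⟩, rfl⟩
  have hvanish {n : σ →₀ ℕ} (hnm : n ≤ m) (hn : aeval x (monomial n (1 : R)) = 0) :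
      aeval x (monomial m (1 : R)) ∈ V := by
    have hdvd_m := aeval_monomial_dvd_of_le (x := x) (R := R) hnm
    rw [hn, zero_dvd_iff] at hdvd_m
    simp [hdvd_m]
  rcases squarefreeExponent_or_single_two_or_le m with
    ⟨S, rfl⟩ | ⟨i, rfl⟩ | ⟨i, him⟩ | ⟨i, j, hij, hijm⟩
  · rw [← prod_X_eq_monomial]
    simp only [map_prod, aeval_X]
    by_cases hS : S = univ
    · simp [hS, hprod]
    · exact hspan hS
  · rw [← X_pow_eq_monomial, map_pow, aeval_X, hsq]
    exact Submodule.smul_mem _ _ (hspan (by simp))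
  · have hzero : aeval x (monomial (Finsupp.single i 3) (1 : R)) = 0 := by
      simpa [aeval_monomial] using cube_eq_zero_of_prod_compl_dvd_sq hdvd hprod i
    exact hvanish him hzero
  · have hzero : aeval x (monomial (Finsupp.single i 2 + Finsupp.single j 1) (1 : R)) = 0 := by
      simpa [aeval_monomial, Finsupp.prod_add_index', pow_add] using
        sq_mul_eq_zero_of_prod_compl_dvd_sq hσ hdvd hprod hij
    exact hvanish hijm hzero

lemma aeval_mem_span_squarefree (hσ : 3 < Fintype.card σ)
    (hsq : ∀ i, x i ^ 2 = a i • ∏ j ∈ {i}ᶜ, x j) (hprod : ∏ i, x i = 0) (p : MvPolynomial σ R) :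
    aeval x p ∈
      Submodule.span R (Set.range fun S : {S : Finset σ // S ≠ univ} => ∏ i ∈ S.1, x i) := by
  rw [p.as_sum, map_sum]
  refine Submodule.sum_mem _ fun m _ => ?_
  rw [← mul_one (coeff m p), ← smul_eq_mul, ← smul_monomial, map_smul]
  exact Submodule.smul_mem _ _ (aeval_monomial_mem_span_squarefree hσ hsq hprod m)

end Span

section ReducedCoeff

variable {σ R : Type*} [Fintype σ] [DecidableEq σ] [CommSemiring R]

/-- The functional reading off the coefficient of `∏ i ∈ S, X i` after replacing every monomial
`X i ^ 2` by `a i * ∏ j ∈ {i}ᶜ, X j`. -/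
noncomputable def reducedCoeff (a : σ → R) (S : Finset σ) : MvPolynomial σ R →ₗ[R] R :=
  lcoeff R (squarefreeExponent S) +
    ∑ i with {i}ᶜ = S, a i • lcoeff R (Finsupp.single i 2)

lemma reducedCoeff_apply (a : σ → R) (S : Finset σ) (p : MvPolynomial σ R) :
    reducedCoeff a S p = coeff (squarefreeExponent S) p +
      ∑ i with {i}ᶜ = S, a i * coeff (Finsupp.single i 2) p := by
  simp [reducedCoeff]

lemma reducedCoeff_prod_X (a : σ → R) (S T : Finset σ) :
    reducedCoeff a S (∏ i ∈ T, X i) = if T = S then 1 else 0 := by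
  have hne (i : σ) : squarefreeExponent T ≠ Finsupp.single i 2 := fun h =>
    not_single_two_le_squarefreeExponent i T h.ge
  simp [reducedCoeff_apply, prod_X_eq_monomial, coeff_monomial, hne,
    squarefreeExponent_injective.eq_iff]

lemma reducedCoeff_mul_prod_univ (hσ : 1 < Fintype.card σ) (a : σ → R) {S : Finset σ}
    (hS : S ≠ univ) (p : MvPolynomial σ R) : reducedCoeff a S (p * ∏ i, X i) = 0 := by
  have huniv : (univ : Finset σ).Nontrivial := one_lt_card_iff_nontrivial.mp hσ
  simp [reducedCoeff_apply, prod_X_eq_monomial, coeff_mul_monomial', squarefreeExponent_le_iff,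
    not_squarefreeExponent_le_single huniv, hS]

lemma reducedCoeff_mul_X_sq (a : σ → R) (S : Finset σ) (i : σ) (p : MvPolynomial σ R) :
    reducedCoeff a S (p * X i ^ 2) = if {i}ᶜ = S then a i * coeff 0 p else 0 := by
  have hle (j : σ) : Finsupp.single i 2 ≤ Finsupp.single j 2 ↔ i = j := by
    rw [Finsupp.single_le_iff, Finsupp.single_apply]
    grind
  rw [reducedCoeff_apply, X_pow_eq_monomial, coeff_mul_monomial',
    if_neg (not_single_two_le_squarefreeExponent i S), zero_add]
  simp [coeff_mul_monomial', hle]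

lemma reducedCoeff_mul_prod_compl (hσ : 2 < Fintype.card σ) (a : σ → R) {S : Finset σ}
    (hS : S ≠ univ) (i : σ) (p : MvPolynomial σ R) :
    reducedCoeff a S (p * ∏ j ∈ {i}ᶜ, X j) = if {i}ᶜ = S then coeff 0 p else 0 := by
  have hcompl : ({i}ᶜ : Finset σ).Nontrivial := by
    rw [← one_lt_card_iff_nontrivial, card_compl, card_singleton]
    lia
  have hsub : {i}ᶜ ⊆ S ↔ {i}ᶜ = S :=
    ((isAtom_singleton i).compl.le_iff_eq hS).trans eq_comm
  simp +contextual [reducedCoeff_apply, prod_X_eq_monomial, coeff_mul_monomial',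
    squarefreeExponent_le_iff, not_squarefreeExponent_le_single hcompl, hsub]

end ReducedCoeff

section SquareReduction

variable {σ R : Type*} [Fintype σ] [DecidableEq σ] [CommRing R]

/-- The ideal of the relations `xᵢ² = aᵢ ∏_{j ≠ i} xⱼ` and `∏ xᵢ = 0`. -/
noncomputable def squareReductionIdeal (a : σ → R) : Ideal (MvPolynomial σ R) :=
  Ideal.span (insert (∏ i, X i) (Set.range fun i => X i ^ 2 - C (a i) * ∏ j ∈ {i}ᶜ, X j))

lemma reducedCoeff_eq_zero_of_mem (hσ : 2 < Fintype.card σ) (a : σ → R) {S : Finset σ}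
    (hS : S ≠ univ) {q : MvPolynomial σ R} (hq : q ∈ squareReductionIdeal a) :
    reducedCoeff a S q = 0 := by
  suffices h : ∀ p, reducedCoeff a S (p * q) = 0 by simpa using h 1
  refine Submodule.span_induction ?_ (by simp) ?_ ?_ hq
  · rintro _ (rfl | ⟨i, rfl⟩) p
    · exact reducedCoeff_mul_prod_univ (by lia) a hS p
    · rw [mul_sub, map_sub, reducedCoeff_mul_X_sq, mul_left_comm, ← smul_eq_C_mul, map_smul,
        reducedCoeff_mul_prod_compl hσ a hS]
      simp
  · intro q r _ _ hq hr p
    rw [mul_add, map_add, hq, hr, add_zero]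
  · intro r q _ hq p
    rw [smul_eq_mul, ← mul_assoc, hq]

lemma linearIndependent_mk_squarefree (hσ : 2 < Fintype.card σ) (a : σ → R) :
    LinearIndependent R fun S : {S : Finset σ // S ≠ univ} =>
      Ideal.Quotient.mk (squareReductionIdeal a) (∏ i ∈ S.1, X i) := by
  rw [Fintype.linearIndependent_iff]
  intro c hc T
  have hmem : ∑ S : {S : Finset σ // S ≠ univ}, c S • ∏ i ∈ S.1, X i ∈ squareReductionIdeal a := by
    rw [← Ideal.Quotient.eq_zero_iff_mem, ← hc, map_sum]
    rfl
  simpa [reducedCoeff_prod_X, Subtype.coe_inj] using reducedCoeff_eq_zero_of_mem hσ a T.2 hmem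

lemma span_mk_squarefree (hσ : 3 < Fintype.card σ) (a : σ → R) :
    Submodule.span R (Set.range fun S : {S : Finset σ // S ≠ univ} =>
      Ideal.Quotient.mk (squareReductionIdeal a) (∏ i ∈ S.1, X i)) = ⊤ := by
  let π := Ideal.Quotient.mkₐ R (squareReductionIdeal a)
  have hsq (i : σ) : π (X i) ^ 2 = a i • ∏ j ∈ {i}ᶜ, π (X j) := by
    have hmem : X i ^ 2 - C (a i) * ∏ j ∈ {i}ᶜ, X j ∈ squareReductionIdeal a :=
      Ideal.subset_span (.inr ⟨i, rfl⟩)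
    rw [← map_prod, ← map_smul, ← map_pow, smul_eq_C_mul]
    exact Ideal.Quotient.eq.mpr hmem
  have hprod : ∏ i, π (X i) = 0 := by
    rw [← map_prod]
    exact Ideal.Quotient.eq_zero_iff_mem.mpr (Ideal.subset_span (.inl rfl))
  refine Submodule.eq_top_iff'.mpr fun y => ?_
  obtain ⟨p, rfl⟩ := Ideal.Quotient.mk_surjective y
  have haeval : aeval (fun i => π (X i)) p = Ideal.Quotient.mk (squareReductionIdeal a) p :=
    (DFunLike.congr_fun (aeval_unique π) p).symm
  simp only [← haeval, map_prod]
  exact aeval_mem_span_squarefree hσ hsq hprod p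

/-- The monomial basis of the quotient by `squareReductionIdeal a`, made of the squarefree monomials
other than the product of all variables. -/
noncomputable def squarefreeBasis (hσ : 3 < Fintype.card σ) (a : σ → R) :
    Module.Basis {S : Finset σ // S ≠ univ} R (MvPolynomial σ R ⧸ squareReductionIdeal a) :=
  .mk (linearIndependent_mk_squarefree (by lia) a) (span_mk_squarefree hσ a).ge

end SquareReduction

section Tjurina

/-- The Tjurina ideal of a polynomial in any family of variables over any commutative
semiring, generated by the polynomial and all its partial derivatives. -/
noncomputable def generalTjurinaIdeal {σ R : Type*} [CommSemiring R] (f : MvPolynomial σ R) :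
    Ideal (MvPolynomial σ R) :=
  Ideal.span (insert f (Set.range fun i => pderiv i f))

/-- The deformation `∑ xᵢ³ + t ∏ xᵢ` of the Fermat cubic in any finite set of variables. -/
noncomputable def fermatCubicFamily (σ : Type*) [Fintype σ] {R : Type*} [CommSemiring R]
    (t : R) : MvPolynomial σ R :=
  ∑ i, X i ^ 3 + C t * ∏ i, X i

variable {σ R K : Type*} [Fintype σ] [CommRing R] [Field K]

lemma pderiv_prod_X [DecidableEq σ] (i : σ) :
    pderiv i (∏ j, X j : MvPolynomial σ R) = ∏ j ∈ {i}ᶜ, X j := by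
  have hexp : squarefreeExponent univ - Finsupp.single i 1 = squarefreeExponent ({i}ᶜ) := by
    ext j
    by_cases hij : j = i <;> simp [squarefreeExponent_apply, hij]
  rw [prod_X_eq_monomial, prod_X_eq_monomial, pderiv_monomial, hexp]
  simp [squarefreeExponent_apply]

lemma pderiv_fermatCubicFamily [DecidableEq σ] (t : R) (i : σ) :
    pderiv i (fermatCubicFamily σ t) = 3 * X i ^ 2 + C t * ∏ j ∈ {i}ᶜ, X j := by
  simp [fermatCubicFamily, pderiv_prod_X, pderiv_X, Pi.single_apply]

lemma sum_X_mul_pderiv_fermatCubicFamily (t : R) :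
    ∑ i, X i * pderiv i (fermatCubicFamily σ t) =
      3 * fermatCubicFamily σ t + C ((Fintype.card σ - 3) * t) * ∏ i, X i := by
  classical
  have hterm (i : σ) : X i * pderiv i (fermatCubicFamily σ t) =
      3 * X i ^ 3 + C t * ∏ j, X j := by
    rw [pderiv_fermatCubicFamily, Fintype.prod_eq_mul_prod_compl i]
    ring
  have h3 : (C 3 : MvPolynomial σ R) = 3 := map_ofNat C 3
  simp only [hterm, sum_add_distrib, sum_const, card_univ, ← mul_sum]
  simp only [fermatCubicFamily, nsmul_eq_mul, C_mul, C_sub, map_natCast, h3]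
  ring

lemma pderiv_fermatCubicFamily_mem_iff [DecidableEq σ] (h3 : (3 : K) ≠ 0) (t : K) (i : σ)
    (I : Ideal (MvPolynomial σ K)) :
    pderiv i (fermatCubicFamily σ t) ∈ I ↔ X i ^ 2 - C (-t / 3) * ∏ j ∈ {i}ᶜ, X j ∈ I := by
  have hpderiv : pderiv i (fermatCubicFamily σ t) =
      C 3 * (X i ^ 2 - C (-t / 3) * ∏ j ∈ {i}ᶜ, X j) := by
    rw [pderiv_fermatCubicFamily, mul_sub, ← mul_assoc, ← C_mul, mul_div_cancel₀ _ h3, C_neg,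
      map_ofNat]
    ring
  rw [hpderiv, Ideal.unit_mul_mem_iff_mem _ (h3.isUnit.map C)]

lemma fermatCubicFamily_mem_iff_prod_X_mem (h3 : (3 : K) ≠ 0) (hcard : (Fintype.card σ : K) ≠ 3)
    {t : K} (ht : t ≠ 0) {I : Ideal (MvPolynomial σ K)}
    (hI : ∀ i, pderiv i (fermatCubicFamily σ t) ∈ I) :
    fermatCubicFamily σ t ∈ I ↔ ∏ i, X i ∈ I := by
  have hsum : C 3 * fermatCubicFamily σ t + C ((Fintype.card σ - 3) * t) * ∏ i, X i ∈ I := by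
    rw [map_ofNat, ← sum_X_mul_pderiv_fermatCubicFamily]
    exact Ideal.sum_mem _ fun i _ => Ideal.mul_mem_left _ _ (hI i)
  have hunit : IsUnit ((Fintype.card σ - 3) * t) := (mul_ne_zero (sub_ne_zero.mpr hcard) ht).isUnit
  calc
    fermatCubicFamily σ t ∈ I ↔ C 3 * fermatCubicFamily σ t ∈ I :=
      (I.unit_mul_mem_iff_mem (h3.isUnit.map C)).symm
    _ ↔ C ((Fintype.card σ - 3) * t) * ∏ i, X i ∈ I :=
      ⟨fun hf => (I.add_mem_iff_right hf).mp hsum, fun hprod => (I.add_mem_iff_left hprod).mp hsum⟩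
    _ ↔ ∏ i, X i ∈ I := I.unit_mul_mem_iff_mem (hunit.map C)

lemma generalTjurinaIdeal_fermatCubicFamily [DecidableEq σ] (h3 : (3 : K) ≠ 0)
    (hcard : (Fintype.card σ : K) ≠ 3) {t : K} (ht : t ≠ 0) :
    generalTjurinaIdeal (fermatCubicFamily σ t) = squareReductionIdeal fun _ : σ => -t / 3 := by
  refine eq_of_forall_ge_iff fun I => ?_
  simp only [generalTjurinaIdeal, squareReductionIdeal, Ideal.span_le, Set.insert_subset_iff,
    Set.range_subset_iff, SetLike.mem_coe, ← pderiv_fermatCubicFamily_mem_iff h3]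
  exact and_congr_left (fermatCubicFamily_mem_iff_prod_X_mem h3 hcard ht)

theorem statement8_general (hσ : 3 < Fintype.card σ) (h3 : (3 : K) ≠ 0)
    (hcard : (Fintype.card σ : K) ≠ 3) {t : K} (ht : t ≠ 0) :
    FiniteDimensional K (MvPolynomial σ K ⧸ generalTjurinaIdeal (fermatCubicFamily σ t)) ∧
    Module.finrank K (MvPolynomial σ K ⧸ generalTjurinaIdeal (fermatCubicFamily σ t)) =
      2 ^ Fintype.card σ - 1 := by
  classical
  rw [generalTjurinaIdeal_fermatCubicFamily h3 hcard ht]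
  let b := squarefreeBasis hσ fun _ : σ => -t / 3
  refine ⟨.of_basis b, ?_⟩
  rw [Module.finrank_eq_card_basis b]
  simp

end Tjurina

lemma tjurinaIdeal_eq_generalTjurinaIdeal (f : MvPolynomial (Fin 4) ℂ) :
    tjurinaIdeal f = generalTjurinaIdeal f := by
  rw [tjurinaIdeal, generalTjurinaIdeal]
  congr 2
  ext g
  simp [Fin.exists_fin_succ, eq_comm]

lemma fermatCubicDef_eq_fermatCubicFamily (t : ℂ) :
    fermatCubicDef t = fermatCubicFamily (Fin 4) t := by
  simp only [fermatCubicDef, fermatCubicFamily, Fin.sum_univ_four, Fin.prod_univ_four]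

theorem statement8 (t : ℂ) (ht : t ≠ 0) :
    FiniteDimensional ℂ (MvPolynomial (Fin 4) ℂ ⧸ tjurinaIdeal (fermatCubicDef t)) ∧
    Module.finrank ℂ (MvPolynomial (Fin 4) ℂ ⧸ tjurinaIdeal (fermatCubicDef t)) = 15 := by
  rw [tjurinaIdeal_eq_generalTjurinaIdeal, fermatCubicDef_eq_fermatCubicFamily]
  simpa using statement8_general (σ := Fin 4) (by simp) three_ne_zero (by norm_num) ht
end

section
/- Let t ∈ ℂ with t ≠ 0 and let f_t = x_0² + x_1² + x_2⁵ − x_3⁵ + t·x_2³x_3³ ∈ ℂ[x_0, x_1, x_2, x_3] (the weight-one deformation of the compound A_4 singularity x² + y² + z⁵ − w⁵). Then the Tjurina algebra ℂ[x_0, x_1, x_2, x_3]/(f_t, ∂f_t/∂x_0, ∂f_t/∂x_1, ∂f_t/∂x_2, ∂f_t/∂x_3) is a finite-dimensional ℂ-vector space of dimension 15. -/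
open MvPolynomial

/-- The weight-one deformation `f_t = x₀² + x₁² + x₂⁵ − x₃⁵ + t·x₂³x₃³` of the compound
`A₄` singularity. -/
noncomputable def cA4Def (t : ℂ) : MvPolynomial (Fin 4) ℂ :=
  X 0 ^ 2 + X 1 ^ 2 + X 2 ^ 5 - X 3 ^ 5 + C t * (X 2 ^ 3 * X 3 ^ 3)

/-!
Write `y = x₂` and `z = x₃`. With weights `1/2, 1/2, 1/5, 1/5`, applying the Euler field to `f_t`
gives `f_t + (t/5) y³z³`, so for `t ≠ 0` the Tjurina ideal is the Jacobian ideal together with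
`y³z³`. It is thus generated by `x₀`, `x₁`, `y⁴ - c y²z³`, `z⁴ - d y³z²` and `y³z³` with
`-c = d = 3t/5`. Over any coefficient ring and for any `c, d`, such an ideal contains `y⁵`, `y⁴z`,
`yz⁴` and `z⁵`, so the quotient is spanned by the fifteen monomials `yⁱzʲ` with `i, j ≤ 3` and
`(i, j) ≠ (3, 3)`. They are independent because the ideal is the kernel of the map reading off
their coefficients after replacing `y⁴` by `c y²z³` and `z⁴` by `d y³z²`.
-/

theorem span_restrictScalars_le_of_mul_mem {R A : Type*} [CommSemiring R] [CommSemiring A]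
    [Algebra R A] {s : Set A} {N : Submodule R A} (h : ∀ g ∈ s, ∀ a, a * g ∈ N) :
    (Ideal.span s).restrictScalars R ≤ N := by
  intro x hx
  induction (hx : x ∈ Submodule.span A s) using Submodule.closure_induction with
  | zero => exact N.zero_mem
  | add x y _ _ hx hy => exact N.add_mem hx hy
  | smul_mem a g hg => exact h g hg a

theorem C_mul_mem_iff {σ K : Type*} [Field K] {I : Ideal (MvPolynomial σ K)} {a : K} (ha : a ≠ 0)
    {p : MvPolynomial σ K} : C a * p ∈ I ↔ p ∈ I :=
  I.unit_mul_mem_iff_mem (ha.isUnit.map C)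

theorem monomial_mem_of_X_mem {σ R : Type*} [CommSemiring R] {I : Ideal (MvPolynomial σ R)} {k : σ}
    (hI : X k ∈ I) {m : σ →₀ ℕ} (hm : m k ≠ 0) (r : R) : monomial m r ∈ I :=
  I.mem_of_dvd (X_dvd_monomial.mpr (.inr hm)) hI

namespace CA4

section ExponentsYZ

variable {R : Type*} [CommSemiring R]

/-- The exponent vector of the monomial `yⁱ zʲ = x₂ⁱ x₃ʲ`. -/
noncomputable def expYZ (i j : ℕ) : Fin 4 →₀ ℕ :=
  Finsupp.single 2 i + Finsupp.single 3 j

theorem eq_expYZ_of_apply_eq_zero {m : Fin 4 →₀ ℕ} (h₀ : m 0 = 0) (h₁ : m 1 = 0) :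
    m = expYZ (m 2) (m 3) := by
  ext k
  fin_cases k <;> simp [expYZ, h₀, h₁]

theorem expYZ_le_iff {a b : ℕ} {m : Fin 4 →₀ ℕ} : expYZ a b ≤ m ↔ a ≤ m 2 ∧ b ≤ m 3 := by
  simp [Finsupp.le_def, Fin.forall_fin_succ, expYZ]

theorem expYZ_le_expYZ {a b i j : ℕ} : expYZ a b ≤ expYZ i j ↔ a ≤ i ∧ b ≤ j := by
  rw [expYZ_le_iff]
  simp [expYZ]

theorem expYZ_inj {a b i j : ℕ} : expYZ a b = expYZ i j ↔ a = i ∧ b = j := by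
  simp only [le_antisymm_iff, expYZ_le_expYZ]
  tauto

theorem expYZ_sub_expYZ (i j a b : ℕ) : expYZ i j - expYZ a b = expYZ (i - a) (j - b) := by
  ext k
  fin_cases k <;> simp [expYZ]

theorem y_pow_mul_z_pow_eq_monomial (a b : ℕ) :
    (X 2 ^ a * X 3 ^ b : MvPolynomial (Fin 4) R) = monomial (expYZ a b) 1 := by
  simp [X_pow_eq_monomial, monomial_mul, expYZ]

theorem coeff_expYZ_mul_y_pow_mul_z_pow (q : MvPolynomial (Fin 4) R) (a b i j : ℕ) :
    coeff (expYZ i j) (q * (X 2 ^ a * X 3 ^ b)) =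
      if a ≤ i ∧ b ≤ j then coeff (expYZ (i - a) (j - b)) q else 0 := by
  simp only [y_pow_mul_z_pow_eq_monomial, coeff_mul_monomial', expYZ_le_expYZ, expYZ_sub_expYZ,
    mul_one]

theorem coeff_expYZ_mul_X {k : Fin 4} (h₂ : k ≠ 2) (h₃ : k ≠ 3) (q : MvPolynomial (Fin 4) R)
    (i j : ℕ) : coeff (expYZ i j) (q * X k) = 0 := by
  rw [coeff_mul_X', if_neg]
  simp [expYZ, h₂, h₃]

theorem monomial_mem_of_y_pow_mul_z_pow_mem {I : Ideal (MvPolynomial (Fin 4) R)} {a b : ℕ}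
    (hI : X 2 ^ a * X 3 ^ b ∈ I) {m : Fin 4 →₀ ℕ} (ha : a ≤ m 2) (hb : b ≤ m 3) (r : R) :
    monomial m r ∈ I := by
  rw [y_pow_mul_z_pow_eq_monomial] at hI
  exact I.mem_of_dvd (monomial_dvd_monomial.mpr ⟨.inr (expYZ_le_iff.mpr ⟨ha, hb⟩), one_dvd r⟩) hI

end ExponentsYZ

section ModelIdeal

variable {R : Type*} [CommRing R]

/-- The relation `y⁴ - c y²z³`, which is `∂f_t/∂x₂` up to a unit when `c = -3t/5`. -/
noncomputable def relY (c : R) : MvPolynomial (Fin 4) R :=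
  X 2 ^ 4 - C c * (X 2 ^ 2 * X 3 ^ 3)

/-- The relation `z⁴ - d y³z²`, which is `∂f_t/∂x₃` up to a unit when `d = 3t/5`. -/
noncomputable def relZ (d : R) : MvPolynomial (Fin 4) R :=
  X 3 ^ 4 - C d * (X 2 ^ 3 * X 3 ^ 2)

/-- The ideal `(x₀, x₁, y⁴ - c y²z³, z⁴ - d y³z², y³z³)`, a normalized form of the Tjurina ideal
that makes sense over any coefficient ring. -/
noncomputable def modelIdeal (c d : R) : Ideal (MvPolynomial (Fin 4) R) :=
  Ideal.span {X 0, X 1, relY c, relZ d, X 2 ^ 3 * X 3 ^ 3}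

variable (c d : R)

theorem X_zero_mem_modelIdeal : X 0 ∈ modelIdeal c d :=
  Ideal.subset_span (by simp)

theorem X_one_mem_modelIdeal : X 1 ∈ modelIdeal c d :=
  Ideal.subset_span (by simp)

theorem relY_mem_modelIdeal : relY c ∈ modelIdeal c d :=
  Ideal.subset_span (by simp)

theorem relZ_mem_modelIdeal : relZ d ∈ modelIdeal c d :=
  Ideal.subset_span (by simp)

theorem y_pow_three_mul_z_pow_three_mem_modelIdeal : X 2 ^ 3 * X 3 ^ 3 ∈ modelIdeal c d :=
  Ideal.subset_span (by simp)

theorem y_pow_five_mem_modelIdeal : X 2 ^ 5 ∈ modelIdeal c d := by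
  have h : (X 2 ^ 5 : MvPolynomial (Fin 4) R) =
      X 2 * relY c + C c * (X 2 ^ 3 * X 3 ^ 3) := by
    rw [relY]; ring
  rw [h]
  exact add_mem (Ideal.mul_mem_left _ _ (relY_mem_modelIdeal c d))
    (Ideal.mul_mem_left _ _ (y_pow_three_mul_z_pow_three_mem_modelIdeal c d))

theorem z_pow_five_mem_modelIdeal : X 3 ^ 5 ∈ modelIdeal c d := by
  have h : (X 3 ^ 5 : MvPolynomial (Fin 4) R) =
      X 3 * relZ d + C d * (X 2 ^ 3 * X 3 ^ 3) := by
    rw [relZ]; ring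
  rw [h]
  exact add_mem (Ideal.mul_mem_left _ _ (relZ_mem_modelIdeal c d))
    (Ideal.mul_mem_left _ _ (y_pow_three_mul_z_pow_three_mem_modelIdeal c d))

theorem y_pow_four_mul_z_mem_modelIdeal : X 2 ^ 4 * X 3 ∈ modelIdeal c d := by
  have h : (X 2 ^ 4 * X 3 : MvPolynomial (Fin 4) R) =
      X 3 * relY c + C c * X 2 ^ 2 * relZ d + C c * C d * X 3 ^ 2 * X 2 ^ 5 := by
    rw [relY, relZ]; ring
  rw [h]
  exact add_mem (add_mem (Ideal.mul_mem_left _ _ (relY_mem_modelIdeal c d))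
    (Ideal.mul_mem_left _ _ (relZ_mem_modelIdeal c d)))
    (Ideal.mul_mem_left _ _ (y_pow_five_mem_modelIdeal c d))

theorem y_mul_z_pow_four_mem_modelIdeal : X 2 * X 3 ^ 4 ∈ modelIdeal c d := by
  have h : (X 2 * X 3 ^ 4 : MvPolynomial (Fin 4) R) =
      X 2 * relZ d + C d * X 3 * (X 2 ^ 4 * X 3) := by
    rw [relZ]; ring
  rw [h]
  exact add_mem (Ideal.mul_mem_left _ _ (relZ_mem_modelIdeal c d))
    (Ideal.mul_mem_left _ _ (y_pow_four_mul_z_mem_modelIdeal c d))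

theorem monomial_mem_modelIdeal {m : Fin 4 →₀ ℕ}
    (hm : m 0 ≠ 0 ∨ m 1 ≠ 0 ∨ (5 ≤ m 2 ∨ 5 ≤ m 3) ∨ (4 ≤ m 2 ∧ 1 ≤ m 3) ∨
      (1 ≤ m 2 ∧ 4 ≤ m 3) ∨ (3 ≤ m 2 ∧ 3 ≤ m 3)) (r : R) :
    monomial m r ∈ modelIdeal c d := by
  rcases hm with h₀ | h₁ | (h₂ | h₃) | ⟨h₂, h₃⟩ | ⟨h₂, h₃⟩ | ⟨h₂, h₃⟩
  · exact monomial_mem_of_X_mem (X_zero_mem_modelIdeal c d) h₀ r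
  · exact monomial_mem_of_X_mem (X_one_mem_modelIdeal c d) h₁ r
  · exact monomial_mem_of_y_pow_mul_z_pow_mem (a := 5) (b := 0)
      (by simpa using y_pow_five_mem_modelIdeal c d) h₂ zero_le r
  · exact monomial_mem_of_y_pow_mul_z_pow_mem (a := 0) (b := 5)
      (by simpa using z_pow_five_mem_modelIdeal c d) zero_le h₃ r
  · exact monomial_mem_of_y_pow_mul_z_pow_mem (a := 4) (b := 1)
      (by simpa using y_pow_four_mul_z_mem_modelIdeal c d) h₂ h₃ r
  · exact monomial_mem_of_y_pow_mul_z_pow_mem (a := 1) (b := 4)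
      (by simpa using y_mul_z_pow_four_mem_modelIdeal c d) h₂ h₃ r
  · exact monomial_mem_of_y_pow_mul_z_pow_mem
      (y_pow_three_mul_z_pow_three_mem_modelIdeal c d) h₂ h₃ r

/-- The index set of the monomial basis of the quotient: `(i, j)` stands for `yⁱ zʲ`. -/
abbrev StdExp : Type := {k : Fin 4 × Fin 4 // k ≠ (3, 3)}

theorem mem_modelIdeal_of_coeff_eq_zero {p : MvPolynomial (Fin 4) R}
    (hstd : ∀ k : StdExp, coeff (expYZ k.1.1 k.1.2) p = 0)
    (hy : coeff (expYZ 4 0) p = 0) (hz : coeff (expYZ 0 4) p = 0) : p ∈ modelIdeal c d := by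
  rw [p.as_sum]
  refine sum_mem fun m hm => monomial_mem_modelIdeal c d ?_ _
  by_contra! hlow
  obtain ⟨h₀, h₁, h⟩ := hlow
  refine mem_support_iff.mp hm ?_
  rw [eq_expYZ_of_apply_eq_zero h₀ h₁]
  obtain ⟨h₂, h₃⟩ | ⟨h₂, h₃⟩ | ⟨h₂, h₃, h₂₃⟩ : (m 2 = 4 ∧ m 3 = 0) ∨ (m 2 = 0 ∧ m 3 = 4) ∨
      (m 2 < 4 ∧ m 3 < 4 ∧ ¬(m 2 = 3 ∧ m 3 = 3)) := by omega
  · rwa [h₂, h₃]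
  · rwa [h₂, h₃]
  · exact hstd ⟨(⟨m 2, h₂⟩, ⟨m 3, h₃⟩), by simpa [Prod.ext_iff, Fin.ext_iff] using h₂₃⟩

/-- The coefficients of a polynomial on the standard monomials after rewriting `y⁴` to `c y²z³` and
`z⁴` to `d y³z²` and dropping every other non-standard monomial. -/
noncomputable def normalForm : MvPolynomial (Fin 4) R →ₗ[R] (StdExp → R) :=
  LinearMap.pi fun k =>
    lcoeff R (expYZ k.1.1 k.1.2) +
      ((if k.1 = (2, 3) then c • lcoeff R (expYZ 4 0) else 0) +
        (if k.1 = (3, 2) then d • lcoeff R (expYZ 0 4) else 0))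

theorem normalForm_apply (p : MvPolynomial (Fin 4) R) (k : StdExp) :
    normalForm c d p k = coeff (expYZ k.1.1 k.1.2) p +
      ((if k.1 = (2, 3) then c * coeff (expYZ 4 0) p else 0) +
        (if k.1 = (3, 2) then d * coeff (expYZ 0 4) p else 0)) := by
  simp only [normalForm, LinearMap.pi_apply, LinearMap.add_apply, lcoeff_apply]
  split_ifs <;> simp

theorem normalForm_surjective : Function.Surjective (normalForm c d) := by
  intro v
  set p : MvPolynomial (Fin 4) R := ∑ k : StdExp, monomial (expYZ k.1.1 k.1.2) (v k) with hp
  have hcoeff (i j : ℕ) : coeff (expYZ i j) p =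
      ∑ k : StdExp, if (k.1.1 : ℕ) = i ∧ (k.1.2 : ℕ) = j then v k else 0 := by
    simp only [hp, coeff_sum, coeff_monomial, expYZ_inj]
  have hy : coeff (expYZ 4 0) p = 0 := by
    rw [hcoeff]
    exact Finset.sum_eq_zero fun k _ => if_neg (by omega)
  have hz : coeff (expYZ 0 4) p = 0 := by
    rw [hcoeff]
    exact Finset.sum_eq_zero fun k _ => if_neg (by omega)
  have hstd (k : StdExp) : coeff (expYZ k.1.1 k.1.2) p = v k := by
    simp [hcoeff, ← Fin.ext_iff, ← Prod.ext_iff, ← Subtype.ext_iff]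
  refine ⟨p, funext fun k => ?_⟩
  simp [normalForm_apply, hy, hz, hstd]

theorem normalForm_mul_X {k : Fin 4} (h₂ : k ≠ 2) (h₃ : k ≠ 3) (q : MvPolynomial (Fin 4) R) :
    normalForm c d (q * X k) = 0 := by
  ext l
  simp [normalForm_apply, coeff_expYZ_mul_X h₂ h₃]

theorem coeff_expYZ_mul_relY (q : MvPolynomial (Fin 4) R) (i j : ℕ) :
    coeff (expYZ i j) (q * relY c) =
      (if 4 ≤ i then coeff (expYZ (i - 4) j) q else 0) -
        c * if 2 ≤ i ∧ 3 ≤ j then coeff (expYZ (i - 2) (j - 3)) q else 0 := by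
  have h : q * relY c = q * (X 2 ^ 4 * X 3 ^ 0) - C c * (q * (X 2 ^ 2 * X 3 ^ 3)) := by
    rw [relY]; ring
  simp only [h, coeff_sub, coeff_C_mul, coeff_expYZ_mul_y_pow_mul_z_pow, zero_le, and_true,
    Nat.sub_zero]

theorem coeff_expYZ_mul_relZ (q : MvPolynomial (Fin 4) R) (i j : ℕ) :
    coeff (expYZ i j) (q * relZ d) =
      (if 4 ≤ j then coeff (expYZ i (j - 4)) q else 0) -
        d * if 3 ≤ i ∧ 2 ≤ j then coeff (expYZ (i - 3) (j - 2)) q else 0 := by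
  have h : q * relZ d = q * (X 2 ^ 0 * X 3 ^ 4) - C d * (q * (X 2 ^ 3 * X 3 ^ 2)) := by
    rw [relZ]; ring
  simp only [h, coeff_sub, coeff_C_mul, coeff_expYZ_mul_y_pow_mul_z_pow, zero_le, true_and,
    Nat.sub_zero]

-- At most the entry `(2, 3)` could be nonzero: it receives `-c q(0)` from `-c y²z³` and `c q(0)`
-- from the rewritten `y⁴`.
theorem normalForm_mul_relY (q : MvPolynomial (Fin 4) R) :
    normalForm c d (q * relY c) = 0 := by
  ext ⟨⟨i, j⟩, hij⟩
  simp only [normalForm_apply, coeff_expYZ_mul_relY, Pi.zero_apply]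
  revert hij
  fin_cases i <;> fin_cases j <;> simp

theorem normalForm_mul_relZ (q : MvPolynomial (Fin 4) R) :
    normalForm c d (q * relZ d) = 0 := by
  ext ⟨⟨i, j⟩, hij⟩
  simp only [normalForm_apply, coeff_expYZ_mul_relZ, Pi.zero_apply]
  revert hij
  fin_cases i <;> fin_cases j <;> simp

theorem normalForm_mul_y_pow_three_mul_z_pow_three (q : MvPolynomial (Fin 4) R) :
    normalForm c d (q * (X 2 ^ 3 * X 3 ^ 3)) = 0 := by
  ext ⟨⟨i, j⟩, hij⟩
  simp only [normalForm_apply, coeff_expYZ_mul_y_pow_mul_z_pow, Pi.zero_apply]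
  revert hij
  fin_cases i <;> fin_cases j <;> simp

theorem modelIdeal_le_ker_normalForm :
    (modelIdeal c d).restrictScalars R ≤ (normalForm c d).ker := by
  refine span_restrictScalars_le_of_mul_mem ?_
  rintro g (rfl | rfl | rfl | rfl | rfl) q
  · exact normalForm_mul_X c d (by decide) (by decide) q
  · exact normalForm_mul_X c d (by decide) (by decide) q
  · exact normalForm_mul_relY c d q
  · exact normalForm_mul_relZ c d q
  · exact normalForm_mul_y_pow_three_mul_z_pow_three c d q

theorem ker_normalForm_le_modelIdeal :
    (normalForm c d).ker ≤ (modelIdeal c d).restrictScalars R := by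
  intro p hp
  set s := C (coeff (expYZ 4 0) p) * relY c + C (coeff (expYZ 0 4) p) * relZ d with hs
  have hsI : s ∈ modelIdeal c d :=
    add_mem (Ideal.mul_mem_left _ _ (relY_mem_modelIdeal c d))
      (Ideal.mul_mem_left _ _ (relZ_mem_modelIdeal c d))
  have hker : normalForm c d (p - s) = 0 := by
    rw [map_sub, hp, modelIdeal_le_ker_normalForm c d hsI, sub_zero]
  have hy : coeff (expYZ 4 0) (p - s) = 0 := by
    simp only [hs, coeff_sub, coeff_add, coeff_expYZ_mul_relY, coeff_expYZ_mul_relZ]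
    simp [expYZ]
  have hz : coeff (expYZ 0 4) (p - s) = 0 := by
    simp only [hs, coeff_sub, coeff_add, coeff_expYZ_mul_relY, coeff_expYZ_mul_relZ]
    simp [expYZ]
  have hstd (k : StdExp) : coeff (expYZ k.1.1 k.1.2) (p - s) = 0 := by
    simpa [normalForm_apply, hy, hz] using congrFun hker k
  exact (Submodule.sub_mem_iff_left _ hsI).mp (mem_modelIdeal_of_coeff_eq_zero c d hstd hy hz)

theorem ker_normalForm : (normalForm c d).ker = (modelIdeal c d).restrictScalars R :=
  (ker_normalForm_le_modelIdeal c d).antisymm (modelIdeal_le_ker_normalForm c d)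

/-- The standard monomials form a basis of the quotient by the model ideal: `normalForm` descends to
an isomorphism. -/
noncomputable def quotientModelIdealEquiv :
    (MvPolynomial (Fin 4) R ⧸ modelIdeal c d) ≃ₗ[R] (StdExp → R) :=
  (Submodule.Quotient.restrictScalarsEquiv R (modelIdeal c d)).symm ≪≫ₗ
    Submodule.quotEquivOfEq _ _ (ker_normalForm c d).symm ≪≫ₗ
    (normalForm c d).quotKerEquivOfSurjective (normalForm_surjective c d)

end ModelIdeal

section TjurinaIdeal

variable (t : ℂ)

theorem pderiv_zero_cA4Def : pderiv 0 (cA4Def t) = C 2 * X 0 := by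
  simp [cA4Def, pderiv_X, map_ofNat C 2]

theorem pderiv_one_cA4Def : pderiv 1 (cA4Def t) = C 2 * X 1 := by
  simp [cA4Def, pderiv_X, map_ofNat C 2]

theorem C_mul_three_eq_C_five_mul {σ : Type*} :
    C t * 3 = C 5 * (C (3 * t / 5) : MvPolynomial σ ℂ) := by
  rw [← map_ofNat C 3, ← C_mul, ← C_mul]
  ring_nf

theorem pderiv_two_cA4Def : pderiv 2 (cA4Def t) = C 5 * relY (-(3 * t / 5)) := by
  have hderiv : pderiv 2 (cA4Def t) = C 5 * X 2 ^ 4 + C t * 3 * (X 2 ^ 2 * X 3 ^ 3) := by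
    simp only [cA4Def, map_add, map_sub, pderiv_mul, pderiv_pow, pderiv_C, pderiv_X_self,
      pderiv_X_of_ne, ne_eq, Fin.reduceEq, not_false_eq_true, map_ofNat C 5]
    push_cast
    ring
  rw [hderiv, C_mul_three_eq_C_five_mul, relY, C_neg]
  ring

theorem pderiv_three_cA4Def : pderiv 3 (cA4Def t) = C (-5) * relZ (3 * t / 5) := by
  have hderiv : pderiv 3 (cA4Def t) = -C 5 * X 3 ^ 4 + C t * 3 * (X 2 ^ 3 * X 3 ^ 2) := by
    simp only [cA4Def, map_add, map_sub, pderiv_mul, pderiv_pow, pderiv_C, pderiv_X_self,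
      pderiv_X_of_ne, ne_eq, Fin.reduceEq, not_false_eq_true, map_ofNat C 5]
    push_cast
    ring
  rw [hderiv, C_mul_three_eq_C_five_mul, relZ, C_neg]
  ring

-- The Euler relation; the last coefficient is `t` times one minus the weight `6/5` of `y³z³`.
theorem cA4Def_eq_euler :
    cA4Def t = X 0 * X 0 + X 1 * X 1 + X 2 * relY (-(3 * t / 5)) - X 3 * relZ (3 * t / 5) +
      C (-t / 5) * (X 2 ^ 3 * X 3 ^ 3) := by
  have hC : (C t : MvPolynomial (Fin 4) ℂ) =
      C (3 * t / 5) + C (3 * t / 5) + C (-t / 5) := by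
    rw [← C_add, ← C_add]; ring_nf
  rw [cA4Def, relY, relZ, hC, C_neg]
  ring

theorem tjurinaIdeal_cA4Def_le :
    tjurinaIdeal (cA4Def t) ≤ modelIdeal (-(3 * t / 5)) (3 * t / 5) := by
  have hX₀ := X_zero_mem_modelIdeal (-(3 * t / 5)) (3 * t / 5)
  have hX₁ := X_one_mem_modelIdeal (-(3 * t / 5)) (3 * t / 5)
  have hY := relY_mem_modelIdeal (-(3 * t / 5)) (3 * t / 5)
  have hZ := relZ_mem_modelIdeal (-(3 * t / 5)) (3 * t / 5)
  have hYZ := y_pow_three_mul_z_pow_three_mem_modelIdeal (-(3 * t / 5)) (3 * t / 5)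
  refine Ideal.span_le.mpr ?_
  rintro g (rfl | rfl | rfl | rfl | rfl)
  · rw [cA4Def_eq_euler]
    exact add_mem (sub_mem (add_mem (add_mem (Ideal.mul_mem_left _ _ hX₀)
      (Ideal.mul_mem_left _ _ hX₁)) (Ideal.mul_mem_left _ _ hY))
      (Ideal.mul_mem_left _ _ hZ)) (Ideal.mul_mem_left _ _ hYZ)
  · rw [pderiv_zero_cA4Def]
    exact Ideal.mul_mem_left _ _ hX₀
  · rw [pderiv_one_cA4Def]
    exact Ideal.mul_mem_left _ _ hX₁
  · rw [pderiv_two_cA4Def]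
    exact Ideal.mul_mem_left _ _ hY
  · rw [pderiv_three_cA4Def]
    exact Ideal.mul_mem_left _ _ hZ

variable {t}

theorem modelIdeal_le_tjurinaIdeal_cA4Def (ht : t ≠ 0) :
    modelIdeal (-(3 * t / 5)) (3 * t / 5) ≤ tjurinaIdeal (cA4Def t) := by
  have hf : cA4Def t ∈ tjurinaIdeal (cA4Def t) := Ideal.subset_span (by simp)
  have hpderiv (i : Fin 4) : pderiv i (cA4Def t) ∈ tjurinaIdeal (cA4Def t) :=
    Ideal.subset_span (by fin_cases i <;> simp)
  have hX₀ : X 0 ∈ tjurinaIdeal (cA4Def t) :=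
    (C_mul_mem_iff two_ne_zero).mp (pderiv_zero_cA4Def t ▸ hpderiv 0)
  have hX₁ : X 1 ∈ tjurinaIdeal (cA4Def t) :=
    (C_mul_mem_iff two_ne_zero).mp (pderiv_one_cA4Def t ▸ hpderiv 1)
  have hY : relY (-(3 * t / 5)) ∈ tjurinaIdeal (cA4Def t) :=
    (C_mul_mem_iff (by norm_num)).mp (pderiv_two_cA4Def t ▸ hpderiv 2)
  have hZ : relZ (3 * t / 5) ∈ tjurinaIdeal (cA4Def t) :=
    (C_mul_mem_iff (by norm_num)).mp (pderiv_three_cA4Def t ▸ hpderiv 3)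
  have hYZ : X 2 ^ 3 * X 3 ^ 3 ∈ tjurinaIdeal (cA4Def t) := by
    refine (C_mul_mem_iff (a := -t / 5) (by simpa using ht)).mp ?_
    rw [← sub_eq_of_eq_add' (cA4Def_eq_euler t)]
    exact sub_mem hf (sub_mem (add_mem (add_mem (Ideal.mul_mem_left _ _ hX₀)
      (Ideal.mul_mem_left _ _ hX₁)) (Ideal.mul_mem_left _ _ hY)) (Ideal.mul_mem_left _ _ hZ))
  refine Ideal.span_le.mpr ?_
  rintro g (rfl | rfl | rfl | rfl | rfl)
  exacts [hX₀, hX₁, hY, hZ, hYZ]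

theorem tjurinaIdeal_cA4Def (ht : t ≠ 0) :
    tjurinaIdeal (cA4Def t) = modelIdeal (-(3 * t / 5)) (3 * t / 5) :=
  (tjurinaIdeal_cA4Def_le t).antisymm (modelIdeal_le_tjurinaIdeal_cA4Def ht)

end TjurinaIdeal

end CA4

theorem statement12 (t : ℂ) (ht : t ≠ 0) :
    FiniteDimensional ℂ (MvPolynomial (Fin 4) ℂ ⧸ tjurinaIdeal (cA4Def t)) ∧
    Module.finrank ℂ (MvPolynomial (Fin 4) ℂ ⧸ tjurinaIdeal (cA4Def t)) = 15 := by
  rw [CA4.tjurinaIdeal_cA4Def ht]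
  let e := CA4.quotientModelIdealEquiv (-(3 * t / 5)) (3 * t / 5)
  refine ⟨Module.Finite.equiv e.symm, ?_⟩
  rw [e.finrank_eq, Module.finrank_fintype_fun_eq_card]
  rfl
end
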